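/- Let k be a field, let B and A be finite type k-algebras, and let f : B → A be a k-algebra homomorphism. Let p be a maximal ideal of A and let q = f⁻¹(p). Assume that f(q)·A_p = p·A_p and that the induced residue field map B/q → A/p is an isomorphism. Then there exist a finitely presented B-algebra C, a surjective B-algebra homomorphism π : C → A, and an element c ∈ C with π(c) ∉ p, such that the localization C_c is an étale B-algebra. -/

import Mathlib

open MvPolynomial in
/-- The localization of `R[X₁, …, Xₙ] / (v₁, …, vₙ)` at the Jacobian determinant is étale. -/
lemma etale_away_jacobian_aux {R : Type} [CommRing R] {n : ℕ}
    (v : Fin n → MvPolynomial (Fin n) R) :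
    Algebra.Etale R (Localization.Away (Ideal.Quotient.mk (Ideal.span (Set.range v))
      (Matrix.det (Matrix.of fun i j => pderiv i (v j))))) := by
  set c := Ideal.Quotient.mk (Ideal.span (Set.range v))
      (Matrix.det (Matrix.of fun i j => pderiv i (v j))) with hc
  let P := Algebra.PreSubmersivePresentation.naive (v := v) (fun i : Fin n => i)
    Function.injective_id
  have hP : P.jacobian = c := by
    rw [Algebra.PreSubmersivePresentation.jacobian_eq_jacobiMatrix_det, hc]
    have : P.jacobiMatrix = Matrix.of fun i j => pderiv i (v j) := by
      ext1 i j
      exact Algebra.PreSubmersivePresentation.jacobiMatrix_naive _ _ _ _ i j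
    rw [this]
    have h2 := P.algebraMap_eq
    rw [h2]
    change aeval P.val _ = _
    have : aeval P.val = Ideal.Quotient.mkₐ R (Ideal.span (Set.range v)) := by
      apply MvPolynomial.algHom_ext
      intro i
      simp [P]
    rw [this]
    rfl
  let Q := Algebra.PreSubmersivePresentation.localizationAway (Localization.Away c) c
  let T : Algebra.SubmersivePresentation R (Localization.Away c) (Unit ⊕ Fin n) (Unit ⊕ Fin n) :=
    { toPreSubmersivePresentation := Q.comp P
      jacobian_isUnit := by
        rw [Algebra.PreSubmersivePresentation.comp_jacobian_eq_jacobian_smul_jacobian, hP,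
          Algebra.smul_def, Algebra.PreSubmersivePresentation.localizationAway_jacobian]
        have := IsLocalization.Away.algebraMap_isUnit (S := Localization.Away c) c
        exact this.mul this }
  have : Algebra.IsStandardSmoothOfRelativeDimension 0 R (Localization.Away c) :=
    ⟨_, _, inferInstance, inferInstance, T, by simp [Algebra.Presentation.dimension]⟩
  infer_instance

open MvPolynomial in
lemma pderiv_mem_map_C_aux {R : Type} [CommRing R] {n : ℕ} (q : Ideal R) (j : Fin n)
    (h : MvPolynomial (Fin n) R) (hh : h ∈ q.map (C : R →+* MvPolynomial (Fin n) R)) :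
    pderiv j h ∈ q.map (C : R →+* MvPolynomial (Fin n) R) := by
  rw [mem_map_C_iff] at hh
  have h2 : h = ∑ m ∈ h.support, monomial m (coeff m h) := (support_sum_monomial_coeff h).symm
  rw [h2, map_sum]
  refine Ideal.sum_mem _ fun m _ => ?_
  rw [pderiv_monomial, ← C_mul_monomial (a := coeff m h)]
  exact Ideal.mul_mem_right _ _ (Ideal.mem_map_of_mem _ (hh m))

/-- Let `k` be a field, `B`, `A` finite type `k`-algebras, `f : B → A` a
`k`-algebra homomorphism, `p` a maximal ideal of `A`, `q = f⁻¹(p)`. Assume `f(q)·A_p = p·A_p`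
and that the residue field map `B/q → A/p` is an isomorphism. Then there exist a finitely
presented `B`-algebra `C`, a surjective `B`-algebra homomorphism `π : C → A` and `c ∈ C` with
`π c ∉ p` such that the localization `C_c` is an étale `B`-algebra. -/
theorem exists_etale_chart_of_unramified_trivial_residue
    (k : Type) [Field k] (B A : Type) [CommRing B] [CommRing A]
    [Algebra k B] [Algebra k A] [Algebra.FiniteType k B] [Algebra.FiniteType k A]
    (f : B →ₐ[k] A) (p : Ideal A) [p.IsMaximal]
    (hloc : ((p.comap f.toRingHom).map f.toRingHom).map
        (algebraMap A (Localization.AtPrime p)) =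
      p.map (algebraMap A (Localization.AtPrime p)))
    (hres : Function.Bijective (Ideal.quotientMap p f.toRingHom le_rfl)) :
    ∃ (C : Type) (_ : CommRing C) (_ : Algebra B C),
      Algebra.FinitePresentation B C ∧
      ∃ π : C →+* A, π.comp (algebraMap B C) = f.toRingHom ∧
        Function.Surjective π ∧
        ∃ c : C, π c ∉ p ∧ Algebra.Etale B (Localization.Away c) := by
  classical
  let _ := f.toRingHom.toAlgebra
  have hf : algebraMap B A = f.toRingHom := rfl
  have : IsScalarTower k B A := IsScalarTower.of_algebraMap_eq fun x => (f.commutes x).symm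
  have : Algebra.FiniteType B A := Algebra.FiniteType.of_restrictScalars_finiteType k B A
  obtain ⟨n, ev, hev⟩ := Algebra.FiniteType.iff_quotient_mvPolynomial''.mp
    (inferInstance : Algebra.FiniteType B A)
  set q := p.comap f.toRingHom with hq
  have hevC : (ev : MvPolynomial (Fin n) B →+* A).comp MvPolynomial.C = f.toRingHom := by
    ext x; exact ev.commutes x
  -- elements of `q B[X]` evaluate into `p`
  have hqp : ∀ h ∈ q.map (MvPolynomial.C : B →+* MvPolynomial (Fin n) B), ev h ∈ p := by
    intro h hh
    have h1 : ev h ∈ (q.map (MvPolynomial.C : B →+* MvPolynomial (Fin n) B)).map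
        (ev : MvPolynomial (Fin n) B →+* A) := Ideal.mem_map_of_mem _ hh
    rw [Ideal.map_map, hevC] at h1
    exact Ideal.map_comap_le h1
  have hb : ∀ i, ∃ b : B, ev (MvPolynomial.X i - MvPolynomial.C b) ∈ p := by
    intro i
    obtain ⟨y, hy⟩ := hres.2 (Ideal.Quotient.mk p (ev (MvPolynomial.X i)))
    obtain ⟨b, rfl⟩ := Ideal.Quotient.mk_surjective y
    refine ⟨b, ?_⟩
    rw [Ideal.quotientMap_mk, eq_comm, Ideal.Quotient.eq] at hy
    have : ev (MvPolynomial.C b) = f.toRingHom b := ev.commutes b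
    rwa [map_sub, this]
  choose b hb using hb
  have hg : ∀ i, ∃ S h : MvPolynomial (Fin n) B, ev S ∉ p ∧
      h ∈ q.map (MvPolynomial.C : B →+* MvPolynomial (Fin n) B) ∧
      ev (S * (MvPolynomial.X i - MvPolynomial.C (b i)) - h) = 0 := by
    intro i
    have h1 := Ideal.mem_map_of_mem (algebraMap A (Localization.AtPrime p)) (hb i)
    rw [← hloc, IsLocalization.algebraMap_mem_map_algebraMap_iff p.primeCompl] at h1
    obtain ⟨s, hs, hs2⟩ := h1
    obtain ⟨S, rfl⟩ := hev s
    rw [← hevC, ← Ideal.map_map, Ideal.mem_map_iff_of_surjective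
      (ev : MvPolynomial (Fin n) B →+* A) hev] at hs2
    obtain ⟨h, hh, hh2⟩ := hs2
    refine ⟨S, h, hs, hh, ?_⟩
    rw [map_sub, map_mul, sub_eq_zero]
    exact hh2.symm
  choose S h hS hh hSh using hg
  let v : Fin n → MvPolynomial (Fin n) B := fun i =>
    S i * (MvPolynomial.X i - MvPolynomial.C (b i)) - h i
  let I := Ideal.span (Set.range v)
  have hI : ∀ a ∈ I, ev a = 0 := by
    have : I ≤ RingHom.ker ev := by
      rw [Ideal.span_le]
      rintro _ ⟨i, rfl⟩
      exact hSh i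
    exact this
  refine ⟨MvPolynomial (Fin n) B ⧸ I, inferInstance, inferInstance, ?_,
    Ideal.Quotient.lift I (ev : MvPolynomial (Fin n) B →+* A) hI, ?_, ?_,
    Ideal.Quotient.mk I (Matrix.det (Matrix.of fun i j => MvPolynomial.pderiv i (v j))), ?_,
    etale_away_jacobian_aux v⟩
  · exact Algebra.FinitePresentation.quotient ((Submodule.fg_span (Set.finite_range v)))
  · ext x
    exact ev.commutes x
  · exact Ideal.Quotient.lift_surjective_of_surjective _ _ hev
  · let φ : MvPolynomial (Fin n) B →+* A ⧸ p :=
      (Ideal.Quotient.mk p).comp (ev : MvPolynomial (Fin n) B →+* A)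
    have hφ : ∀ a, φ a = 0 ↔ ev a ∈ p := fun a => Ideal.Quotient.eq_zero_iff_mem
    change ¬ (ev _ ∈ p)
    rw [← hφ, RingHom.map_det]
    have hmat : φ.mapMatrix (Matrix.of fun i j => MvPolynomial.pderiv i (v j)) =
        Matrix.diagonal fun i => φ (S i) := by
      ext i j
      have h0 : φ (MvPolynomial.X j - MvPolynomial.C (b j)) = 0 := (hφ _).2 (hb j)
      have h1 : φ (MvPolynomial.pderiv i (h j)) = 0 :=
        (hφ _).2 (hqp _ (pderiv_mem_map_C_aux q i _ (hh j)))
      have h2 : MvPolynomial.pderiv i (v j) =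
          S j * MvPolynomial.pderiv i (MvPolynomial.X j - MvPolynomial.C (b j)) +
          (MvPolynomial.X j - MvPolynomial.C (b j)) * MvPolynomial.pderiv i (S j)
          - MvPolynomial.pderiv i (h j) := by
        simp only [v, map_sub, Derivation.leibniz, smul_eq_mul]
      rw [RingHom.mapMatrix_apply, Matrix.map_apply, Matrix.of_apply, h2, map_sub, map_add,
        map_mul, map_mul, h0, h1, map_sub, MvPolynomial.pderiv_C, MvPolynomial.pderiv_X]
      by_cases hij : i = j
      · subst hij
        simp
      · simp [Matrix.diagonal_apply_ne _ hij, Pi.single_apply, hij, Ne.symm hij]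
    rw [hmat, Matrix.det_diagonal]
    exact Finset.prod_ne_zero_iff.2 fun i _ => fun hc => hS i ((hφ _).1 hc)
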